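/- (1D subsolution.) Let N = 1, Ω = (0,∞), s ∈ (1/2,1), and let L_Ω be either the operator L_Ω u(x) = PV ∫_0^∞ (u(x)−u(y)) K_Ω(x,y) dy with K_Ω(x,y) = c_{1,s}|x−y|^{−1−2s} + k_Ω(x,y), or the regional fractional Laplacian L_Ω u(x) = c_{1,s} PV ∫_0^∞ (u(x)−u(y))|x−y|^{−1−2s} dy. Fix r₀ > 0, let η ∈ C_0^∞([0,2r₀)) satisfy 0 ≤ η ≤ 1 and η = 1 on [0,r₀], and let ζ ∈ C_0^∞((r₀,2r₀)) satisfy 0 ≤ ζ ≤ 1 and ζ ≢ 0. Then for any c̲ ≥ 0 there exists M > 0, depending only on c̲, s and r₀, such that the function φ̲(x) := η(x) x^{2s−1} + M ζ(x) satisfies L_Ω φ̲(x) ≤ −c̲ for all x ∈ (0,r₀). Moreover, in the case of the kernel K_Ω = c_{1,s}|x−y|^{−1−2s} + k_Ω, the stronger bound L_Ω φ̲(x) ≤ −c̲ (1 + log^−(x/r₀)) holds for all x ∈ (0,r₀). -/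

import Mathlib

open MeasureTheory Metric Set Filter Topology
open scoped ENNReal NNReal

noncomputable section

/-- The normalizing constant `c_{N,s}` of the fractional Laplacian. -/
def cNs (N : ℕ) (s : ℝ) : ℝ :=
  (2:ℝ) ^ (2 * s) * Real.Gamma ((N : ℝ) / 2 + s) /
    (Real.pi ^ ((N : ℝ) / 2) * |Real.Gamma (-s)|)

/-- `log⁻ t = max 0 (−log t)`. -/
def logNeg (t : ℝ) : ℝ := max 0 (-Real.log t)

/-- The one-dimensional kernel `k_Ω` for `Ω = (0,∞)`. -/
def k1 (s : ℝ) (x y : ℝ) : ℝ :=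
  cNs 1 s * ∫ z in Set.Iic (0:ℝ),
    (|x - z| ^ (1 + 2 * s) * |y - z| ^ (1 + 2 * s) *
      ∫ w in Set.Ioi (0:ℝ), |z - w| ^ (-(1:ℝ) - 2 * s))⁻¹

/-- The one-dimensional kernel `K_Ω = c_{1,s}|x-y|^{-1-2s} + k_Ω(x,y)` of the Neumann
problem for the fractional Laplacian on `Ω = (0,∞)`. -/
def neumannKer1 (s : ℝ) (x y : ℝ) : ℝ :=
  cNs 1 s * |x - y| ^ (-(1:ℝ) - 2 * s) + k1 s x y

/-- The kernel of the one-dimensional regional fractional Laplacian on `(0,∞)`. -/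
def regionalKer1 (s : ℝ) (x y : ℝ) : ℝ :=
  cNs 1 s * |x - y| ^ (-(1:ℝ) - 2 * s)

/-- `L_Ω u (x) = PV ∫_0^∞ (u(x)-u(y)) K(x,y) dy` exists and has value `l`. -/
def HasPV1 (K : ℝ → ℝ → ℝ) (u : ℝ → ℝ) (x l : ℝ) : Prop :=
  Filter.Tendsto
    (fun ε : ℝ => ∫ y in {y : ℝ | 0 < y ∧ ε < |x - y|}, (u x - u y) * K x y)
    (𝓝[>] (0:ℝ)) (𝓝 l)

/-- The bilinear form on `(0,∞) × (0,∞)` associated with a kernel. -/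
def BForm1 (K : ℝ → ℝ → ℝ) (u v : ℝ → ℝ) : ℝ :=
  ∫ x in Set.Ioi (0:ℝ), ∫ y in Set.Ioi (0:ℝ), (u x - u y) * (v x - v y) * K x y

/-- `α` is an admissible exponent of the one-dimensional boundary regularity theorem
(Theorem `Thm:BoundaryRegBH`) for the operator with kernel `K` on `(0,∞)`: every
solution `u` of `L u = f` on `(0,2R)` with `u(0) = 0`, `f ∈ L^∞`, and growth
`|u(y)| ≤ c₀ (1 + y^{2s-ε₀})` with `ε₀ > 1`, satisfies the corresponding interior-to-boundary
`C^α` estimate for `u(x)/x^{2s-1}`. -/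
def BoundaryRegExponent (s : ℝ) (K : ℝ → ℝ → ℝ) (α : ℝ) : Prop :=
  α ∈ Set.Ioo (0:ℝ) 1 ∧
    ∀ c₀ > (0:ℝ), ∀ ε₀ > (1:ℝ), ∃ C > (0:ℝ), ∀ R > (0:ℝ), ∀ u f : ℝ → ℝ,
      (∀ x ∈ Set.Ioo (0:ℝ) (2 * R), HasPV1 K u x (f x)) → u 0 = 0 →
      (∀ y > (0:ℝ), |u y| ≤ c₀ * (1 + y ^ (2 * s - ε₀))) →
      ∀ Mu Mf : ℝ, (∀ x ∈ Set.Ioo (0:ℝ) (2 * R), |u x| ≤ Mu) →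
        (∀ x ∈ Set.Ioo (0:ℝ) (2 * R), |f x| ≤ Mf) →
        ∀ x ∈ Set.Ioc (0:ℝ) R, ∀ y ∈ Set.Ioc (0:ℝ) R,
          |u x / x ^ (2 * s - 1) - u y / y ^ (2 * s - 1)| ≤
            C * R ^ (1 - 2 * s) * (|x - y| / R) ^ α * (Mu + R ^ (2 * s) * Mf)

end
noncomputable section

def kI (s x y : ℝ) : ℝ :=
  ∫ z in Ioi (0:ℝ), 2 * s * z ^ (2*s) * (z + x) ^ (-(1:ℝ) - 2 * s) * (y + z) ^ (-(1:ℝ) - 2 * s)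

lemma taylor_aux {f : ℝ → ℝ} {a b : ℝ} (hab : a < b) (hf : ContDiffOn ℝ 2 f (Icc a b))
    (hd : HasDerivAt f 0 a) : ∃ C, 0 ≤ C ∧ ∀ x ∈ Icc a b, |f x - f a| ≤ C * (x - a) ^ 2 := by
  obtain ⟨C, hC⟩ := exists_taylor_mean_remainder_bound (n := 1) hab.le
    (by convert hf using 1; norm_num)
  refine ⟨|C|, abs_nonneg _, fun x hx => ?_⟩
  have h := hC x hx
  have hdw : derivWithin f (Icc a b) a = 0 :=
    hd.hasDerivWithinAt.derivWithin (uniqueDiffOn_Icc hab a (left_mem_Icc.2 hab.le))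
  rw [taylorWithinEval_succ] at h
  simp [iteratedDerivWithin_one, hdw] at h
  exact h.trans (mul_le_mul_of_nonneg_right (le_abs_self C) (by positivity))

lemma lemA {s a : ℝ} (hs : 0 < s) (ha : 0 < a) :
    IntegrableOn (fun y : ℝ => (y + a) ^ (-(1:ℝ) - 2 * s)) (Ioi 0) ∧
    ∫ y in Ioi (0:ℝ), (y + a) ^ (-(1:ℝ) - 2 * s) = a ^ (-(2 * s)) / (2 * s) := by
  have hd : ∀ y ∈ Ioi (0:ℝ), HasDerivAt (fun y : ℝ => -((y + a) ^ (-(2*s)) / (2*s)))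
      ((y + a) ^ (-(1:ℝ) - 2 * s)) y := by
    intro y hy
    have hy' : (0:ℝ) < y := hy
    have h := (((hasDerivAt_id y).add_const a).rpow_const (p := -(2*s))
      (Or.inl (by simp; positivity))).div_const (2*s)
    refine h.neg.congr_deriv ?_
    try simp only [id]
    rw [show -(2*s) - 1 = -(1:ℝ) - 2*s by ring]
    field_simp
  have hc : ContinuousWithinAt (fun y : ℝ => -((y + a) ^ (-(2*s)) / (2*s))) (Ici 0) 0 := by
    apply ContinuousAt.continuousWithinAt
    apply ContinuousAt.neg
    apply ContinuousAt.div_const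
    exact ContinuousAt.rpow_const (by fun_prop) (Or.inl (by simp; positivity))
  have hp : ∀ y ∈ Ioi (0:ℝ), 0 ≤ (y + a) ^ (-(1:ℝ) - 2 * s) := by
    intro y hy
    have hy' : (0:ℝ) < y := hy
    positivity
  have hl : Tendsto (fun y : ℝ => -((y + a) ^ (-(2*s)) / (2*s))) atTop (𝓝 0) := by
    have := ((tendsto_rpow_neg_atTop (show 0 < 2*s by positivity)).comp
      (tendsto_atTop_add_const_right atTop a tendsto_id)).div_const (2*s)
    simpa using this.neg
  refine ⟨integrableOn_Ioi_deriv_of_nonneg hc hd hp hl, ?_⟩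
  rw [integral_Ioi_of_hasDerivAt_of_nonneg hc hd hp hl]
  simp

lemma lemB {s a : ℝ} (hs : 1/2 < s) (ha : 0 < a) :
    IntegrableOn (fun y : ℝ => y ^ (2*s-1) * (y + a) ^ (-(1:ℝ) - 2 * s)) (Ioi 0) ∧
    ∫ y in Ioi (0:ℝ), y ^ (2*s-1) * (y + a) ^ (-(1:ℝ) - 2 * s) = 1 / (2 * s * a) := by
  have hs0 : 0 < s := by linarith
  have hd : ∀ y ∈ Ioi (0:ℝ), HasDerivAt (fun y : ℝ => (y / (y + a)) ^ (2*s) / (2*s*a))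
      (y ^ (2*s-1) * (y + a) ^ (-(1:ℝ) - 2 * s)) y := by
    intro y hy
    have hy' : (0:ℝ) < y := hy
    have hya : 0 < y + a := by positivity
    have h := (((hasDerivAt_id y).div ((hasDerivAt_id y).add_const a) hya.ne').rpow_const
      (p := 2*s) (Or.inr (by linarith))).div_const (2*s*a)
    refine h.congr_deriv ?_
    try simp only [id, Pi.div_apply]
    rw [Real.div_rpow hy'.le hya.le, show -(1:ℝ) - 2*s = -(2*s-1) - (2:ℕ) by push_cast; ring,
      Real.rpow_sub_natCast hya.ne', Real.rpow_neg hya.le]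
    field_simp
    ring
  have hc : ContinuousWithinAt (fun y : ℝ => (y / (y + a)) ^ (2*s) / (2*s*a)) (Ici 0) 0 := by
    apply ContinuousAt.continuousWithinAt
    apply ContinuousAt.div_const
    exact ContinuousAt.rpow_const (by apply ContinuousAt.div <;> first | fun_prop | simp [ha.ne'])
      (Or.inr (by linarith))
  have hp : ∀ y ∈ Ioi (0:ℝ), 0 ≤ y ^ (2*s-1) * (y + a) ^ (-(1:ℝ) - 2 * s) := by
    intro y hy
    have hy' : (0:ℝ) < y := hy
    positivity
  have hl : Tendsto (fun y : ℝ => (y / (y + a)) ^ (2*s) / (2*s*a)) atTop (𝓝 (1 / (2*s*a))) := by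
    apply Tendsto.div_const
    have h1 : Tendsto (fun y : ℝ => y / (y + a)) atTop (𝓝 1) := by
      have h2 : Tendsto (fun y : ℝ => 1 - a / (y + a)) atTop (𝓝 (1 - 0)) :=
        tendsto_const_nhds.sub (tendsto_const_nhds.div_atTop
          (tendsto_atTop_add_const_right atTop a tendsto_id))
      rw [sub_zero] at h2
      refine h2.congr' ?_
      filter_upwards [eventually_gt_atTop 0] with y hy
      have : 0 < y + a := by positivity
      field_simp
      ring
    simpa using h1.rpow_const (p := 2*s) (Or.inr (by linarith))
  refine ⟨integrableOn_Ioi_deriv_of_nonneg hc hd hp hl, ?_⟩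
  rw [integral_Ioi_of_hasDerivAt_of_nonneg hc hd hp hl]
  simp [Real.zero_rpow (show 2*s ≠ 0 by positivity)]

lemma k1_eq {s x y : ℝ} (hs : 0 < s) (hx : 0 < x) (hy : 0 < y) :
    k1 s x y = cNs 1 s * kI s x y := by
  unfold k1 kI
  congr 1
  have h := integral_comp_neg_Iic (0:ℝ) (fun z : ℝ => (|x + z| ^ (1 + 2 * s) * |y + z| ^ (1 + 2 * s) *
      ∫ w in Set.Ioi (0:ℝ), |-z - w| ^ (-(1:ℝ) - 2 * s))⁻¹)
  simp only [neg_neg, ← sub_eq_add_neg, neg_zero] at h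
  rw [h]
  refine setIntegral_congr_fun measurableSet_Ioi fun z hz => ?_
  have hz' : (0:ℝ) < z := hz
  have h2 : ∫ w in Set.Ioi (0:ℝ), |-z - w| ^ (-(1:ℝ) - 2 * s) = z ^ (-(2*s)) / (2*s) := by
    rw [← (lemA hs hz').2]
    refine setIntegral_congr_fun measurableSet_Ioi fun w hw => ?_
    have hw' : (0:ℝ) < w := hw
    rw [show -z - w = -(w + z) by ring, abs_neg, abs_of_pos (by positivity)]
  simp only [h2]
  rw [abs_of_pos (by positivity), abs_of_pos (by positivity),
    show -(1:ℝ) - 2*s = -(1+2*s) by ring, Real.rpow_neg (by positivity),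
    Real.rpow_neg (by positivity), Real.rpow_neg (by positivity), add_comm z x]
  have : 0 < z ^ (2*s) := by positivity
  field_simp

lemma fub {s x : ℝ} (hs : 0 < s) (hx : 0 < x) {w W : ℝ → ℝ} (hwm : Measurable w)
    (hw0 : ∀ y ∈ Ioi (0:ℝ), 0 ≤ w y)
    (hwi : ∀ z ∈ Ioi (0:ℝ), IntegrableOn (fun y : ℝ => w y * (y + z) ^ (-(1:ℝ) - 2 * s)) (Ioi 0))
    (hwW : ∀ z ∈ Ioi (0:ℝ), ∫ y in Ioi (0:ℝ), w y * (y + z) ^ (-(1:ℝ) - 2 * s) = W z)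
    (hW : IntegrableOn (fun z : ℝ => 2 * s * z ^ (2*s) * (z + x) ^ (-(1:ℝ) - 2 * s) * W z) (Ioi 0)) :
    IntegrableOn (fun y => w y * kI s x y) (Ioi 0) ∧
    ∫ y in Ioi (0:ℝ), w y * kI s x y =
      ∫ z in Ioi (0:ℝ), 2 * s * z ^ (2*s) * (z + x) ^ (-(1:ℝ) - 2 * s) * W z := by
  set F : ℝ → ℝ → ℝ := fun y z =>
    2 * s * z ^ (2*s) * (z + x) ^ (-(1:ℝ) - 2 * s) * (w y * (y + z) ^ (-(1:ℝ) - 2 * s)) with hF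
  have hm : AEStronglyMeasurable (Function.uncurry F)
      ((volume.restrict (Ioi (0:ℝ))).prod (volume.restrict (Ioi (0:ℝ)))) := by
    apply Measurable.aestronglyMeasurable
    simp only [hF, Function.uncurry_def]
    fun_prop
  have hi : ∀ z, z ∈ Ioi (0:ℝ) → ∫ y in Ioi (0:ℝ), F y z =
      2 * s * z ^ (2*s) * (z + x) ^ (-(1:ℝ) - 2 * s) * W z := by
    intro z hz
    simp only [hF]
    rw [integral_const_mul, hwW z hz]
  have hint : Integrable (Function.uncurry F)
      ((volume.restrict (Ioi (0:ℝ))).prod (volume.restrict (Ioi (0:ℝ)))) := by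
    rw [integrable_prod_iff' hm]
    constructor
    · filter_upwards [ae_restrict_mem measurableSet_Ioi] with z hz
      simp only [Function.uncurry, hF]
      exact (hwi z hz).const_mul _
    · refine hW.congr ?_
      filter_upwards [ae_restrict_mem measurableSet_Ioi] with z hz
      rw [← hi z hz]
      refine setIntegral_congr_fun measurableSet_Ioi fun y hy => ?_
      have hz' : (0:ℝ) < z := hz
      have hy' : (0:ℝ) < y := hy
      have := hw0 y hy
      simp only [Function.uncurry]
      rw [Real.norm_of_nonneg]
      simp only [hF]
      positivity
  have hk : ∀ y, w y * kI s x y = ∫ z in Ioi (0:ℝ), F y z := by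
    intro y
    simp only [hF, kI]
    rw [← integral_const_mul]
    congr 1
    ext z
    ring
  constructor
  · have := hint.integral_prod_left
    simp only [Function.uncurry] at this
    simp only [hk]
    exact this
  · simp only [hk]
    rw [integral_integral_swap hint]
    exact setIntegral_congr_fun measurableSet_Ioi hi

lemma fubA {s x : ℝ} (hs : 0 < s) (hx : 0 < x) :
    IntegrableOn (fun y => kI s x y) (Ioi 0) ∧
    ∫ y in Ioi (0:ℝ), kI s x y = x ^ (-(2 * s)) / (2 * s) := by
  have he : ∀ z ∈ Ioi (0:ℝ), (z + x) ^ (-(1:ℝ) - 2 * s) =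
      2 * s * z ^ (2*s) * (z + x) ^ (-(1:ℝ) - 2 * s) * (z ^ (-(2 * s)) / (2 * s)) := by
    intro z hz
    have hz' : (0:ℝ) < z := hz
    rw [Real.rpow_neg hz'.le]
    have : 0 < z ^ (2*s) := by positivity
    field_simp
  have h := fub (W := fun z => z ^ (-(2 * s)) / (2 * s)) hs hx (w := fun _ => 1) measurable_const
    (fun _ _ => zero_le_one)
    (fun z hz => by simpa using (lemA hs hz).1) (fun z hz => by simpa using (lemA hs hz).2)
    ((lemA hs hx).1.congr_fun he measurableSet_Ioi)
  rw [← setIntegral_congr_fun measurableSet_Ioi he, (lemA hs hx).2] at h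
  simpa using h

lemma fubB {s x : ℝ} (hs : 1/2 < s) (hx : 0 < x) :
    IntegrableOn (fun y => y ^ (2*s-1) * kI s x y) (Ioi 0) ∧
    ∫ y in Ioi (0:ℝ), y ^ (2*s-1) * kI s x y = 1 / (2 * s * x) := by
  have hs0 : 0 < s := by linarith
  have he : ∀ z ∈ Ioi (0:ℝ), z ^ (2*s-1) * (z + x) ^ (-(1:ℝ) - 2 * s) =
      2 * s * z ^ (2*s) * (z + x) ^ (-(1:ℝ) - 2 * s) * (1 / (2 * s * z)) := by
    intro z hz
    have hz' : (0:ℝ) < z := hz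
    rw [Real.rpow_sub_one hz'.ne']
    field_simp
  have h := fub (W := fun z => 1 / (2 * s * z)) hs0 hx (w := fun y => y ^ (2*s-1)) (by fun_prop)
    (fun y hy => Real.rpow_nonneg (le_of_lt hy) _)
    (fun z hz => (lemB hs hz).1) (fun z hz => (lemB hs hz).2)
    ((lemB hs hx).1.congr_fun he measurableSet_Ioi)
  rw [← setIntegral_congr_fun measurableSet_Ioi he, (lemB hs hx).2] at h
  exact h

lemma E_eq {x ε : ℝ} (_hε : 0 < ε) :
    {y : ℝ | 0 < y ∧ ε < |x - y|} = Ioo 0 (x - ε) ∪ (Ioi (x + ε) ∩ Ioi 0) := by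
  ext y
  simp only [mem_ofPred_eq, mem_union, mem_Ioo, mem_Ioi, lt_abs, mem_inter_iff]
  constructor
  · rintro ⟨h1, h2 | h2⟩
    · left; constructor <;> linarith
    · right; constructor <;> linarith
  · rintro (⟨h1, h2⟩ | ⟨h1, h2⟩)
    · exact ⟨h1, Or.inl (by linarith)⟩
    · exact ⟨h2, Or.inr (by linarith)⟩

lemma lemC1 {s x ε : ℝ} (hs : 1/2 < s) (hε : 0 < ε) (hx : ε < x) :
    IntegrableOn (fun y : ℝ => (x ^ (2*s-1) - y ^ (2*s-1)) * |x - y| ^ (-(1:ℝ) - 2 * s)) (Ioo 0 (x-ε)) ∧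
    ∫ y in Ioo 0 (x-ε), (x ^ (2*s-1) - y ^ (2*s-1)) * |x - y| ^ (-(1:ℝ) - 2 * s) =
      (x ^ (2*s) - (x-ε) ^ (2*s)) * ε ^ (-(2*s)) / (2*s*x) - 1 / (2*s*x) := by
  have hs0 : 0 < s := by linarith
  have hx0 : 0 < x := by linarith
  have hle : 0 ≤ x - ε := by linarith
  have hcg : ContinuousOn (fun y : ℝ => (x ^ (2*s-1) - y ^ (2*s-1)) * |x - y| ^ (-(1:ℝ) - 2 * s))
      (Icc 0 (x - ε)) := by
    apply ContinuousOn.mul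
    · exact continuousOn_const.sub (continuousOn_id.rpow_const (fun _ _ => Or.inr (by linarith)))
    · apply ContinuousOn.rpow_const (by fun_prop)
      intro y hy
      left
      have := hy.2
      exact abs_ne_zero.2 (by linarith)
  have hi : IntegrableOn (fun y : ℝ => (x ^ (2*s-1) - y ^ (2*s-1)) * |x - y| ^ (-(1:ℝ) - 2 * s))
      (Icc 0 (x - ε)) := hcg.integrableOn_Icc
  refine ⟨hi.mono_set Ioo_subset_Icc_self, ?_⟩
  rw [← integral_Ioc_eq_integral_Ioo, ← intervalIntegral.integral_of_le hle]
  rw [intervalIntegral.integral_eq_sub_of_hasDerivAt_of_le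
    (f := fun y => (x ^ (2*s) - y ^ (2*s)) * (x - y) ^ (-(2*s)) / (2*s*x)) hle]
  · simp only [Real.zero_rpow (show 2*s ≠ 0 by positivity), sub_zero, sub_sub_cancel]
    rw [Real.rpow_neg hx0.le, mul_inv_cancel₀ (by positivity)]
  · apply ContinuousOn.div_const
    apply ContinuousOn.mul
    · exact continuousOn_const.sub (continuousOn_id.rpow_const (fun _ _ => Or.inr (by linarith)))
    · apply ContinuousOn.rpow_const (by fun_prop)
      intro y hy
      left
      have := hy.2
      linarith
  · intro y hy
    have hy0 := hy.1
    have hxy : 0 < x - y := by have := hy.2; linarith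
    have h1 := ((hasDerivAt_id y).rpow_const (p := 2*s) (Or.inl hy0.ne')).const_sub (x ^ (2*s))
    have h2 := ((hasDerivAt_id y).const_sub x).rpow_const (p := -(2*s)) (Or.inl hxy.ne')
    refine ((h1.mul h2).div_const (2*s*x)).congr_deriv ?_
    simp only [id]
    rw [abs_of_pos hxy, show -(1:ℝ) - 2*s = -(2*s) - 1 by ring, Real.rpow_sub_one hxy.ne',
      Real.rpow_sub_one hx0.ne', Real.rpow_sub_one hy0.ne']
    field_simp
    ring
  · rw [intervalIntegrable_iff_integrableOn_Icc_of_le hle]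
    exact hi

lemma lemC2 {s x ε : ℝ} (hs : 1/2 < s) (hε : 0 < ε) (hx : 0 < x) :
    IntegrableOn (fun y : ℝ => (x ^ (2*s-1) - y ^ (2*s-1)) * |x - y| ^ (-(1:ℝ) - 2 * s)) (Ioi (x+ε)) ∧
    ∫ y in Ioi (x+ε), (x ^ (2*s-1) - y ^ (2*s-1)) * |x - y| ^ (-(1:ℝ) - 2 * s) =
      1 / (2*s*x) - ((x+ε) ^ (2*s) - x ^ (2*s)) * ε ^ (-(2*s)) / (2*s*x) := by
  have hs0 : 0 < s := by linarith
  have hd' : ∀ y > x, HasDerivAt (fun y => (y ^ (2*s) - x ^ (2*s)) * (y - x) ^ (-(2*s)) / (2*s*x))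
     ((x ^ (2*s-1) - y ^ (2*s-1)) * |x - y| ^ (-(1:ℝ) - 2 * s)) y := by
    intro y hy
    have hy0 : 0 < y := hx.trans hy
    have hxy : 0 < y - x := by linarith
    have h1 := ((hasDerivAt_id y).rpow_const (p := 2*s) (Or.inl hy0.ne')).sub_const (x ^ (2*s))
    have h2 := ((hasDerivAt_id y).sub_const x).rpow_const (p := -(2*s)) (Or.inl hxy.ne')
    refine ((h1.mul h2).div_const (2*s*x)).congr_deriv ?_
    simp only [id]
    rw [abs_sub_comm, abs_of_pos hxy, show -(1:ℝ) - 2*s = -(2*s) - 1 by ring,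
      Real.rpow_sub_one hxy.ne', Real.rpow_sub_one hx.ne', Real.rpow_sub_one hy0.ne']
    field_simp
    ring
  have hc : ContinuousWithinAt (fun y => (y ^ (2*s) - x ^ (2*s)) * (y - x) ^ (-(2*s)) / (2*s*x))
      (Ici (x+ε)) (x+ε) := (hd' (x+ε) (by linarith)).continuousAt.continuousWithinAt
  have hd : ∀ y ∈ Ioi (x+ε), HasDerivAt
      (fun y => (y ^ (2*s) - x ^ (2*s)) * (y - x) ^ (-(2*s)) / (2*s*x))
      ((x ^ (2*s-1) - y ^ (2*s-1)) * |x - y| ^ (-(1:ℝ) - 2 * s)) y := by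
    intro y hy
    have hy' : x + ε < y := hy
    exact hd' y (by linarith)
  have hn : ∀ y ∈ Ioi (x+ε), (x ^ (2*s-1) - y ^ (2*s-1)) * |x - y| ^ (-(1:ℝ) - 2 * s) ≤ 0 := by
    intro y hy
    have hy' : x + ε < y := hy
    apply mul_nonpos_of_nonpos_of_nonneg
    · rw [sub_nonpos]
      exact Real.rpow_le_rpow hx.le (by linarith) (by linarith)
    · positivity
  have hl : Tendsto (fun y => (y ^ (2*s) - x ^ (2*s)) * (y - x) ^ (-(2*s)) / (2*s*x)) atTop
      (𝓝 (1 / (2*s*x))) := by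
    apply Tendsto.div_const
    have ht : Tendsto (fun y : ℝ => y - x) atTop atTop :=
      tendsto_atTop_add_const_right atTop (-x) tendsto_id
    have h1 : Tendsto (fun y : ℝ => (1 + x / (y - x)) ^ (2*s)) atTop (𝓝 ((1 + 0) ^ (2*s))) :=
      (tendsto_const_nhds.add (tendsto_const_nhds.div_atTop ht)).rpow_const (Or.inr (by linarith))
    have h2 : Tendsto (fun y : ℝ => x ^ (2*s) * (y - x) ^ (-(2*s))) atTop (𝓝 (x ^ (2*s) * 0)) :=
      ((tendsto_rpow_neg_atTop (show 0 < 2*s by positivity)).comp ht).const_mul _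
    have h3 := h1.sub h2
    simp only [add_zero, Real.one_rpow, mul_zero, sub_zero] at h3
    refine h3.congr' ?_
    filter_upwards [eventually_gt_atTop x] with y hy
    have hxy : 0 < y - x := by linarith
    rw [show 1 + x / (y - x) = y / (y - x) by field_simp; ring,
      Real.div_rpow (by linarith) hxy.le, Real.rpow_neg hxy.le]
    ring
  refine ⟨integrableOn_Ioi_deriv_of_nonpos hc hd hn hl, ?_⟩
  rw [integral_Ioi_of_hasDerivAt_of_nonpos hc hd hn hl, add_sub_cancel_left]

lemma lemC {s x ε : ℝ} (hs : 1/2 < s) (hε : 0 < ε) (hx : ε < x) :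
    IntegrableOn (fun y : ℝ => (x ^ (2*s-1) - y ^ (2*s-1)) * |x - y| ^ (-(1:ℝ) - 2 * s))
      {y : ℝ | 0 < y ∧ ε < |x - y|} ∧
    ∫ y in {y : ℝ | 0 < y ∧ ε < |x - y|}, (x ^ (2*s-1) - y ^ (2*s-1)) * |x - y| ^ (-(1:ℝ) - 2 * s) =
      (2 * x ^ (2*s) - (x-ε) ^ (2*s) - (x+ε) ^ (2*s)) * ε ^ (-(2*s)) / (2*s*x) := by
  have hx0 : 0 < x := by linarith
  rw [E_eq hε, inter_eq_left.2 (Ioi_subset_Ioi (by linarith))]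
  have h1 := lemC1 hs hε hx
  have h2 := lemC2 hs hε hx0
  refine ⟨h1.1.union h2.1, ?_⟩
  rw [setIntegral_union _ measurableSet_Ioi h1.1 h2.1, h1.2, h2.2]
  · ring
  · rw [Set.disjoint_left]
    intro y h3 h4
    have h5 := h3.2
    have h6 : x + ε < y := h4
    linarith

lemma lemD {s x : ℝ} (hs : 1/2 < s) (hs1 : s < 1) (hx : 0 < x) :
    Tendsto (fun ε : ℝ => (2 * x ^ (2*s) - (x-ε) ^ (2*s) - (x+ε) ^ (2*s)) * ε ^ (-(2*s)) / (2*s*x))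
      (𝓝[>] 0) (𝓝 0) := by
  have hd : HasDerivAt (fun e : ℝ => (x-e) ^ (2*s) + (x+e) ^ (2*s)) 0 0 := by
    have h1 := ((hasDerivAt_id (0:ℝ)).const_sub x).rpow_const (p := 2*s) (Or.inl (by simp [hx.ne']))
    have h2 := ((hasDerivAt_id (0:ℝ)).const_add x).rpow_const (p := 2*s) (Or.inl (by simp [hx.ne']))
    refine (h1.add h2).congr_deriv ?_
    simp
  have hcd : ContDiffOn ℝ 2 (fun e : ℝ => (x-e) ^ (2*s) + (x+e) ^ (2*s)) (Icc 0 (x/2)) := by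
    apply ContDiffOn.add
    · apply ContDiffOn.rpow_const_of_ne (by fun_prop)
      intro e he
      have := he.2
      have : 0 < x - e := by linarith
      exact this.ne'
    · apply ContDiffOn.rpow_const_of_ne (by fun_prop)
      intro e he
      have := he.1
      have : 0 < x + e := by linarith
      exact this.ne'
  obtain ⟨C, hC0, hC⟩ := taylor_aux (by positivity) hcd hd
  have hlim : Tendsto (fun ε : ℝ => C * ε ^ (2 - 2*s) / (2*s*x)) (𝓝[>] 0) (𝓝 0) := by
    have h : Tendsto (fun ε : ℝ => C * ε ^ (2 - 2*s) / (2*s*x)) (𝓝 0) (𝓝 (C * 0 ^ (2 - 2*s) / (2*s*x))) :=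
      ((tendsto_id.rpow_const (Or.inr (by linarith))).const_mul C).div_const _
    rw [Real.zero_rpow (by linarith)] at h
    simp only [mul_zero, zero_div] at h
    exact h.mono_left nhdsWithin_le_nhds
  refine squeeze_zero_norm' ?_ hlim
  filter_upwards [Ioo_mem_nhdsGT (show (0:ℝ) < x/2 by positivity)] with e he
  have he0 := he.1
  have h := hC e ⟨he.1.le, he.2.le⟩
  simp only [sub_zero, add_zero] at h
  rw [norm_div, norm_mul, Real.norm_of_nonneg (show 0 ≤ e ^ (-(2*s)) by positivity),
    Real.norm_of_nonneg (show 0 ≤ 2*s*x by positivity)]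
  have h3 : e ^ (2 - 2*s) = e ^ 2 * e ^ (-(2*s)) := by
    rw [sub_eq_add_neg, Real.rpow_add he0, Real.rpow_two]
  rw [h3, ← mul_assoc]
  gcongr
  rw [Real.norm_eq_abs, abs_sub_comm] at *
  refine le_trans (le_of_eq ?_) h
  rw [abs_sub_comm]
  congr 1
  ring

lemma cNs_pos {s : ℝ} (hs : s ∈ Ioo (1 / 2 : ℝ) 1) : 0 < cNs 1 s := by
  have h1 := hs.1
  have h2 := hs.2
  unfold cNs
  have hg : Real.Gamma (-s) ≠ 0 := by
    apply Real.Gamma_ne_zero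
    intro m hm
    have h3 : s = m := by linarith
    rcases Nat.eq_zero_or_pos m with h | h
    · simp [h] at h3; linarith
    · have : (1:ℝ) ≤ m := by exact_mod_cast h
      linarith
  have hg' : 0 < Real.Gamma (((1:ℕ):ℝ) / 2 + s) := Real.Gamma_pos_of_pos (by push_cast; linarith)
  have := abs_pos.2 hg
  have := Real.pi_pos
  positivity

lemma kInt {s x y : ℝ} (hs : 0 < s) (hx : 0 < x) (hy : 0 < y) :
    IntegrableOn (fun z : ℝ => 2 * s * z ^ (2*s) * (z + x) ^ (-(1:ℝ) - 2 * s) *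
      (y + z) ^ (-(1:ℝ) - 2 * s)) (Ioi 0) := by
  have h := ((lemA hs hy).1.const_mul (2 * s * x⁻¹))
  refine Integrable.mono' h (Measurable.aestronglyMeasurable (by fun_prop)) ?_
  filter_upwards [ae_restrict_mem measurableSet_Ioi] with z hz
  have hz' : (0:ℝ) < z := hz
  rw [Real.norm_of_nonneg (by positivity), add_comm y z]
  refine mul_le_mul_of_nonneg_right ?_ (by positivity)
  rw [mul_assoc]
  refine mul_le_mul_of_nonneg_left ?_ (by positivity)
  calc z ^ (2*s) * (z + x) ^ (-(1:ℝ) - 2 * s) ≤ (z+x) ^ (2*s) * (z + x) ^ (-(1:ℝ) - 2 * s) := by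
        gcongr; linarith
    _ = (z + x)⁻¹ := by
        rw [← Real.rpow_add (by positivity), ← Real.rpow_neg_one]; congr 1; ring
    _ ≤ x⁻¹ := by gcongr; linarith

lemma kI_nonneg {s x y : ℝ} (hs : 0 < s) (hx : 0 < x) (hy : 0 < y) : 0 ≤ kI s x y := by
  apply setIntegral_nonneg measurableSet_Ioi
  intro z hz
  have hz' : (0:ℝ) < z := hz
  positivity

lemma kI_upper {s x y r : ℝ} (hs : 1/2 < s) (hx : 0 < x) (hxr : x < r) (hy : r ≤ y) :
    kI s x y ≤ 2 * s * y ^ (-(1/2:ℝ) - 2*s) * r ^ (-(1/2:ℝ)) * (3 + Real.log (r / x)) := by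
  have hs0 : 0 < s := by linarith
  have hr : 0 < r := hx.trans hxr
  have hy0 : 0 < y := hr.trans_le hy
  have hk := kInt hs0 hx hy0
  unfold kI
  rw [← Ioc_union_Ioi_eq_Ioi hr.le, setIntegral_union (Set.Ioc_disjoint_Ioi le_rfl) measurableSet_Ioi
    (hk.mono_set Ioc_subset_Ioi_self) (hk.mono_set (Ioi_subset_Ioi hr.le))]
  have h1 : ∫ z in Ioc 0 r, 2 * s * z ^ (2*s) * (z + x) ^ (-(1:ℝ) - 2 * s) *
      (y + z) ^ (-(1:ℝ) - 2 * s) ≤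
      ∫ z in Ioc 0 r, 2 * s * y ^ (-(1/2:ℝ) - 2*s) * r ^ (-(1/2:ℝ)) * (z + x)⁻¹ := by
    apply setIntegral_mono_on (hk.mono_set Ioc_subset_Ioi_self) _ measurableSet_Ioc
    · intro z hz
      have hz0 := hz.1
      have e1 : z ^ (2*s) * (z + x) ^ (-(1:ℝ) - 2 * s) ≤ (z + x)⁻¹ := by
        calc z ^ (2*s) * (z + x) ^ (-(1:ℝ) - 2 * s)
            ≤ (z+x) ^ (2*s) * (z + x) ^ (-(1:ℝ) - 2 * s) := by
              gcongr; linarith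
          _ = (z + x)⁻¹ := by
              rw [← Real.rpow_add (by positivity), ← Real.rpow_neg_one]; congr 1; ring
      have e2 : (y + z) ^ (-(1:ℝ) - 2 * s) ≤ y ^ (-(1/2:ℝ) - 2*s) * r ^ (-(1/2:ℝ)) := by
        calc (y + z) ^ (-(1:ℝ) - 2 * s) ≤ y ^ (-(1:ℝ) - 2 * s) :=
              Real.rpow_le_rpow_of_nonpos hy0 (by linarith) (by linarith)
          _ = y ^ (-(1/2:ℝ) - 2*s) * y ^ (-(1/2:ℝ)) := by
              rw [← Real.rpow_add hy0]; congr 1; ring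
          _ ≤ _ := by
              gcongr ?_ * ?_
              exact Real.rpow_le_rpow_of_nonpos hr hy (by norm_num)
      calc _ = 2 * s * ((z ^ (2*s) * (z + x) ^ (-(1:ℝ) - 2 * s)) * (y + z) ^ (-(1:ℝ) - 2 * s)) := by ring
        _ ≤ 2 * s * ((z + x)⁻¹ * (y ^ (-(1/2:ℝ) - 2*s) * r ^ (-(1/2:ℝ)))) := by gcongr
        _ = _ := by ring
    · apply Integrable.const_mul
      have : ContinuousOn (fun z : ℝ => (z + x)⁻¹) (Icc 0 r) := by
        apply ContinuousOn.inv₀ (by fun_prop)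
        intro z hz
        have := hz.1
        positivity
      exact this.integrableOn_Icc.mono_set Ioc_subset_Icc_self
  have h2 : ∫ z in Ioi r, 2 * s * z ^ (2*s) * (z + x) ^ (-(1:ℝ) - 2 * s) *
      (y + z) ^ (-(1:ℝ) - 2 * s) ≤
      ∫ z in Ioi r, 2 * s * y ^ (-(1/2:ℝ) - 2*s) * z ^ (-(3/2:ℝ)) := by
    apply setIntegral_mono_on (hk.mono_set (Ioi_subset_Ioi hr.le)) _ measurableSet_Ioi
    · intro z hz
      have hz0 : 0 < z := hr.trans hz
      have e1 : z ^ (2*s) * (z + x) ^ (-(1:ℝ) - 2 * s) ≤ z ^ (-1:ℝ) := by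
        calc z ^ (2*s) * (z + x) ^ (-(1:ℝ) - 2 * s)
            ≤ z ^ (2*s) * z ^ (-(1:ℝ) - 2 * s) := by
              gcongr ?_ * ?_
              exact Real.rpow_le_rpow_of_nonpos hz0 (by linarith) (by linarith)
          _ = z ^ (-1:ℝ) := by
              rw [← Real.rpow_add (by positivity)]; congr 1; ring
      have e2 : (y + z) ^ (-(1:ℝ) - 2 * s) ≤ y ^ (-(1/2:ℝ) - 2*s) * z ^ (-(1/2:ℝ)) := by
        calc (y + z) ^ (-(1:ℝ) - 2 * s) = (y + z) ^ (-(1/2:ℝ) - 2*s) * (y + z) ^ (-(1/2:ℝ)) := by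
              rw [← Real.rpow_add (by positivity)]; congr 1; ring
          _ ≤ _ := by
              gcongr ?_ * ?_
              · exact Real.rpow_le_rpow_of_nonpos hy0 (by linarith) (by linarith)
              · exact Real.rpow_le_rpow_of_nonpos hz0 (by linarith) (by norm_num)
      have e3 : z ^ (-(3/2:ℝ)) = z ^ (-1:ℝ) * z ^ (-(1/2:ℝ)) := by
        rw [← Real.rpow_add (by positivity)]; congr 1; ring
      rw [e3]
      calc _ = 2 * s * ((z ^ (2*s) * (z + x) ^ (-(1:ℝ) - 2 * s)) * (y + z) ^ (-(1:ℝ) - 2 * s)) := by ring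
        _ ≤ 2 * s * (z ^ (-1:ℝ) * (y ^ (-(1/2:ℝ) - 2*s) * z ^ (-(1/2:ℝ)))) := by gcongr
        _ = _ := by ring
    · apply Integrable.const_mul
      exact integrableOn_Ioi_rpow_of_lt (by norm_num) hr
  have h3 : ∫ z in Ioc 0 r, (z + x)⁻¹ = Real.log ((r + x) / x) := by
    rw [← intervalIntegral.integral_of_le hr.le,
      intervalIntegral.integral_comp_add_right (fun z => z⁻¹) x, zero_add,
      integral_inv_of_pos hx (by positivity)]
  have h4 : Real.log ((r + x) / x) ≤ 1 + Real.log (r / x) := by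
    have : Real.log ((r + x) / x) ≤ Real.log (2 * (r / x)) := by
      apply Real.log_le_log (by positivity)
      rw [← mul_div_assoc]
      gcongr
      linarith
    rw [Real.log_mul (by norm_num) (by positivity)] at this
    have := Real.log_two_lt_d9
    linarith
  rw [integral_const_mul, h3] at h1
  rw [integral_const_mul, integral_Ioi_rpow_of_lt (by norm_num) hr,
    show -(3/2:ℝ) + 1 = -(1/2) by norm_num] at h2
  have hq : 0 ≤ 2 * s * y ^ (-(1/2:ℝ) - 2*s) * r ^ (-(1/2:ℝ)) := by positivity
  calc _ ≤ _ := add_le_add h1 h2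
    _ = 2 * s * y ^ (-(1/2:ℝ) - 2*s) * r ^ (-(1/2:ℝ)) * (Real.log ((r + x) / x) + 2) := by ring
    _ ≤ _ := mul_le_mul_of_nonneg_left (by linarith) hq

lemma kI_lower {s x y r : ℝ} (hs : 1/2 < s) (hx : 0 < x) (hxr : x < r) (hy : 0 < y) (hy2 : y ≤ 2 * r) :
    2 * s * 2 ^ (-(1:ℝ) - 2 * s) * (3 * r) ^ (-(1:ℝ) - 2 * s) * Real.log (r / x) ≤ kI s x y := by
  have hs0 : 0 < s := by linarith
  have hr : 0 < r := hx.trans hxr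
  have hk := kInt hs0 hx hy
  have h3 : ∫ z in Ioc x r, z⁻¹ = Real.log (r / x) := by
    rw [← intervalIntegral.integral_of_le hxr.le, integral_inv_of_pos hx hr]
  have hsub : Ioc x r ⊆ Ioi 0 := fun z hz => hx.trans hz.1
  rw [← h3, ← integral_const_mul]
  unfold kI
  calc _ ≤ ∫ z in Ioc x r, 2 * s * z ^ (2*s) * (z + x) ^ (-(1:ℝ) - 2 * s) *
      (y + z) ^ (-(1:ℝ) - 2 * s) := by
        apply setIntegral_mono_on _ (hk.mono_set hsub) measurableSet_Ioc
        · intro z hz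
          have hz0 : 0 < z := hx.trans hz.1
          have hzx := hz.1
          have hzr := hz.2
          have e1 : 2 ^ (-(1:ℝ) - 2 * s) * z⁻¹ ≤ z ^ (2*s) * (z + x) ^ (-(1:ℝ) - 2 * s) := by
            calc 2 ^ (-(1:ℝ) - 2 * s) * z⁻¹ = z ^ (2*s) * (2 * z) ^ (-(1:ℝ) - 2 * s) := by
                  rw [Real.mul_rpow (by norm_num) hz0.le, ← Real.rpow_neg_one z,
                    show (-1:ℝ) = 2*s + (-(1:ℝ) - 2*s) by ring, Real.rpow_add hz0,
                    show 2*s + (-(1:ℝ) - 2*s) - 2 * s = -(1:ℝ) - 2*s by ring]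
                  ring
              _ ≤ _ := by
                  gcongr ?_ * ?_
                  exact Real.rpow_le_rpow_of_nonpos (by positivity) (by linarith) (by linarith)
          have e2 : (3 * r) ^ (-(1:ℝ) - 2 * s) ≤ (y + z) ^ (-(1:ℝ) - 2 * s) :=
            Real.rpow_le_rpow_of_nonpos (by positivity) (by linarith) (by linarith)
          calc _ = 2 * s * ((2 ^ (-(1:ℝ) - 2 * s) * z⁻¹) * (3 * r) ^ (-(1:ℝ) - 2 * s)) := by ring
            _ ≤ 2 * s * ((z ^ (2*s) * (z + x) ^ (-(1:ℝ) - 2 * s)) * (y + z) ^ (-(1:ℝ) - 2 * s)) := by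
              gcongr
            _ = _ := by ring
        · apply Integrable.const_mul
          have : ContinuousOn (fun z : ℝ => z⁻¹) (Icc x r) := by
            apply ContinuousOn.inv₀ (by fun_prop)
            intro z hz
            have := hz.1
            linarith
          exact this.integrableOn_Icc.mono_set Ioc_subset_Icc_self
    _ ≤ _ := by
        apply setIntegral_mono_set hk _ hsub.eventuallyLE
        filter_upwards [ae_restrict_mem measurableSet_Ioi] with z hz
        have hz' : (0:ℝ) < z := hz
        simp only [Pi.zero_apply]
        positivity

lemma lemE {s r : ℝ} (hs : 1/2 < s) (hs1 : s < 1) (hr : 0 < r) {η : ℝ → ℝ}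
    (hη : ContDiff ℝ (⊤ : ℕ∞) η) (hη01 : ∀ x, 0 ≤ η x ∧ η x ≤ 1)
    (hη1 : ∀ x ∈ Set.Icc (0:ℝ) r, η x = 1) :
    ∃ A, 0 ≤ A ∧ ∀ x ∈ Ioo 0 r,
      IntegrableOn (fun y : ℝ => (1 - η y) * y ^ (2*s-1) * |x - y| ^ (-(1:ℝ) - 2 * s)) (Ioi 0) ∧
      ∫ y in Ioi (0:ℝ), (1 - η y) * y ^ (2*s-1) * |x - y| ^ (-(1:ℝ) - 2 * s) ≤ A := by
  have hηm : Measurable η := hη.continuous.measurable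
  have hηr : η r = 1 := hη1 r ⟨hr.le, le_rfl⟩
  have hd : HasDerivAt η 0 r := by
    have hmax : IsLocalMax η r := Filter.Eventually.of_forall fun y => by
      rw [hηr]; exact (hη01 y).2
    have h := (hη.differentiable (by simp)).differentiableAt (x := r) |>.hasDerivAt
    rwa [hmax.deriv_eq_zero] at h
  obtain ⟨C, hC0, hC⟩ := taylor_aux (show r < 2 * r by linarith)
    ((contDiff_infty.1 hη 2).contDiffOn) hd
  set G : ℝ → ℝ := fun y => (1 - η y) * y ^ (2*s-1) * |r - y| ^ (-(1:ℝ) - 2 * s) with hG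
  have hGm : ∀ S : Set ℝ, AEStronglyMeasurable G (volume.restrict S) := fun S =>
    Measurable.aestronglyMeasurable (by simp only [hG]; fun_prop)
  have hG0 : ∀ y ∈ Ioi (0:ℝ), 0 ≤ G y := by
    intro y hy
    have hy' : (0:ℝ) < y := hy
    have := (hη01 y).2
    have : 0 ≤ 1 - η y := by linarith
    positivity
  have g1 : IntegrableOn G (Ioc 0 r) := by
    refine (integrableOn_zero (s := Ioc 0 r)).congr_fun ?_ measurableSet_Ioc
    intro y hy
    simp [hG, hη1 y ⟨hy.1.le, hy.2⟩]
  have g2 : IntegrableOn G (Ioc r (2*r)) := by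
    have hi : IntegrableOn (fun y : ℝ => C * (2*r) ^ (2*s-1) * (y - r) ^ (1 - 2*s)) (Ioc r (2*r)) := by
      apply Integrable.const_mul
      have h := (intervalIntegral.intervalIntegrable_rpow' (a := 0) (b := r)
        (show -1 < 1 - 2*s by linarith)).comp_sub_right r
      rw [intervalIntegrable_iff_integrableOn_Ioc_of_le (by linarith)] at h
      rw [zero_add, ← two_mul] at h
      exact h
    refine Integrable.mono' hi (hGm _) ?_
    filter_upwards [ae_restrict_mem measurableSet_Ioc] with y hy
    have hyr : 0 < y - r := by linarith [hy.1]
    have hy0 : 0 < y := by linarith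
    rw [Real.norm_of_nonneg (hG0 y hy0)]
    simp only [hG]
    rw [abs_sub_comm, abs_of_pos hyr]
    have h1 : 1 - η y ≤ C * (y - r) ^ 2 := by
      have h := hC y ⟨hy.1.le, hy.2⟩
      rw [hηr, abs_sub_comm] at h
      exact (le_abs_self _).trans h
    have h2 : y ^ (2*s-1) ≤ (2*r) ^ (2*s-1) := Real.rpow_le_rpow hy0.le hy.2 (by linarith)
    calc (1 - η y) * y ^ (2*s-1) * (y - r) ^ (-(1:ℝ) - 2 * s)
        ≤ (C * (y - r) ^ 2) * (2*r) ^ (2*s-1) * (y - r) ^ (-(1:ℝ) - 2 * s) := by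
          gcongr
      _ = C * (2*r) ^ (2*s-1) * (y - r) ^ (1 - 2*s) := by
          rw [show 1 - 2*s = (2:ℝ) + (-(1:ℝ) - 2*s) by ring, Real.rpow_add hyr, Real.rpow_two]
          ring
  have g3 : IntegrableOn G (Ioi (2*r)) := by
    have hi : IntegrableOn (fun y : ℝ => (1/2:ℝ) ^ (-(1:ℝ) - 2*s) * y ^ (-2:ℝ)) (Ioi (2*r)) :=
      (integrableOn_Ioi_rpow_of_lt (by norm_num) (by positivity)).const_mul _
    refine Integrable.mono' hi (hGm _) ?_
    filter_upwards [ae_restrict_mem measurableSet_Ioi] with y hy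
    have hy2 : 2 * r < y := hy
    have hyr : 0 < y - r := by linarith
    have hy0 : 0 < y := by linarith
    rw [Real.norm_of_nonneg (hG0 y hy0)]
    simp only [hG]
    rw [abs_sub_comm, abs_of_pos hyr]
    have h1 : 1 - η y ≤ 1 := by linarith [(hη01 y).1]
    have h2 : (y - r) ^ (-(1:ℝ) - 2 * s) ≤ (1/2 * y) ^ (-(1:ℝ) - 2 * s) :=
      Real.rpow_le_rpow_of_nonpos (by positivity) (by linarith) (by linarith)
    calc (1 - η y) * y ^ (2*s-1) * (y - r) ^ (-(1:ℝ) - 2 * s)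
        ≤ 1 * y ^ (2*s-1) * (1/2 * y) ^ (-(1:ℝ) - 2 * s) := by
          gcongr
      _ = (1/2:ℝ) ^ (-(1:ℝ) - 2*s) * y ^ (-2:ℝ) := by
          rw [Real.mul_rpow (by norm_num) hy0.le,
            show (-2:ℝ) = (2*s-1) + (-(1:ℝ) - 2*s) by ring, Real.rpow_add hy0]
          ring
  have hGi : IntegrableOn G (Ioi 0) := by
    rw [← Ioc_union_Ioi_eq_Ioi hr.le, ← Ioc_union_Ioi_eq_Ioi (show r ≤ 2*r by linarith)]
    exact g1.union (g2.union g3)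
  refine ⟨∫ y in Ioi (0:ℝ), G y, setIntegral_nonneg measurableSet_Ioi hG0, fun x hx => ?_⟩
  have hle : ∀ y ∈ Ioi (0:ℝ), 0 ≤ (1 - η y) * y ^ (2*s-1) * |x - y| ^ (-(1:ℝ) - 2 * s) ∧
      (1 - η y) * y ^ (2*s-1) * |x - y| ^ (-(1:ℝ) - 2 * s) ≤ G y := by
    intro y hy
    have hy' : (0:ℝ) < y := hy
    have h0 : 0 ≤ 1 - η y := by linarith [(hη01 y).2]
    refine ⟨by positivity, ?_⟩
    rcases le_or_gt y r with h | h
    · simp [hG, hη1 y ⟨hy'.le, h⟩]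
    · simp only [hG]
      have := hx.2
      refine mul_le_mul_of_nonneg_left ?_ (by positivity)
      rw [abs_sub_comm, abs_of_pos (show 0 < y - x by linarith), abs_sub_comm,
        abs_of_pos (show 0 < y - r by linarith)]
      exact Real.rpow_le_rpow_of_nonpos (by linarith) (by linarith) (by linarith)
  have hxi : IntegrableOn (fun y : ℝ => (1 - η y) * y ^ (2*s-1) * |x - y| ^ (-(1:ℝ) - 2 * s)) (Ioi 0) := by
    refine Integrable.mono' hGi (Measurable.aestronglyMeasurable (by fun_prop)) ?_
    filter_upwards [ae_restrict_mem measurableSet_Ioi] with y hy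
    rw [Real.norm_of_nonneg (hle y hy).1]
    exact (hle y hy).2
  exact ⟨hxi, setIntegral_mono_on hxi hGi measurableSet_Ioi fun y hy => (hle y hy).2⟩

lemma lemE2 {s r : ℝ} (hs : 1/2 < s) (hr : 0 < r) {η : ℝ → ℝ}
    (hηm : Measurable η) (hη01 : ∀ x, 0 ≤ η x ∧ η x ≤ 1)
    (hη1 : ∀ x ∈ Set.Icc (0:ℝ) r, η x = 1) {x : ℝ} (hx : x ∈ Ioo 0 r) :
      IntegrableOn (fun y : ℝ => (1 - η y) * y ^ (2*s-1) * kI s x y) (Ioi 0) ∧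
      ∫ y in Ioi (0:ℝ), (1 - η y) * y ^ (2*s-1) * kI s x y ≤
        4 * s / r * (3 + Real.log (r / x)) := by
  have hs0 : 0 < s := by linarith
  have hx0 := hx.1
  have hi : IntegrableOn (fun y : ℝ => (1 - η y) * y ^ (2*s-1) * kI s x y) (Ioi 0) := by
    have h := (fubB hs hx0).1
    have := h.bdd_mul (f := fun y => 1 - η y) (c := 1) (Measurable.aestronglyMeasurable (by fun_prop))
      (Filter.Eventually.of_forall fun y => by
        rw [Real.norm_of_nonneg (by linarith [(hη01 y).2])]; linarith [(hη01 y).1])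
    simp only [mul_assoc]
    exact this
  refine ⟨hi, ?_⟩
  rw [← Ioc_union_Ioi_eq_Ioi hr.le, setIntegral_union (Set.Ioc_disjoint_Ioi le_rfl) measurableSet_Ioi
    (hi.mono_set Ioc_subset_Ioi_self) (hi.mono_set (Ioi_subset_Ioi hr.le))]
  have h1 : ∫ y in Ioc 0 r, (1 - η y) * y ^ (2*s-1) * kI s x y = 0 := by
    rw [setIntegral_congr_fun (g := fun _ => (0:ℝ)) measurableSet_Ioc]
    · simp
    · intro y hy
      simp [hη1 y ⟨hy.1.le, hy.2⟩]
  have h2 : ∫ y in Ioi r, (1 - η y) * y ^ (2*s-1) * kI s x y ≤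
      ∫ y in Ioi r, 2 * s * r ^ (-(1/2:ℝ)) * (3 + Real.log (r / x)) * y ^ (-(3/2:ℝ)) := by
    apply setIntegral_mono_on (hi.mono_set (Ioi_subset_Ioi hr.le)) _ measurableSet_Ioi
    · intro y hy
      have hyr : r < y := hy
      have hy0 : 0 < y := hr.trans hyr
      have hk := kI_upper hs hx0 hx.2 hyr.le
      have hk0 := kI_nonneg hs0 hx0 hy0
      have h1 : 1 - η y ≤ 1 := by linarith [(hη01 y).1]
      calc (1 - η y) * y ^ (2*s-1) * kI s x y ≤ 1 * y ^ (2*s-1) *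
            (2 * s * y ^ (-(1/2:ℝ) - 2*s) * r ^ (-(1/2:ℝ)) * (3 + Real.log (r / x))) := by gcongr
        _ = _ := by
          rw [show -(3/2:ℝ) = (2*s-1) + (-(1/2:ℝ) - 2*s) by ring, Real.rpow_add hy0]
          ring
    · exact (integrableOn_Ioi_rpow_of_lt (by norm_num) hr).const_mul _
  rw [integral_const_mul, integral_Ioi_rpow_of_lt (by norm_num) hr,
    show -(3/2:ℝ) + 1 = -(1/2) by norm_num] at h2
  rw [h1, zero_add]
  refine h2.trans (le_of_eq ?_)
  have h3 : r ^ (-(1/2:ℝ)) * r ^ (-(1/2:ℝ)) = r⁻¹ := by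
    rw [← Real.rpow_add hr, ← Real.rpow_neg_one]; norm_num
  calc _ = 4 * s * (r ^ (-(1/2:ℝ)) * r ^ (-(1/2:ℝ))) * (3 + Real.log (r / x)) := by ring
    _ = _ := by rw [h3]; ring

lemma lemZ0 {r : ℝ} (hr : 0 < r) {ζ : ℝ → ℝ}
    (hζc : Continuous ζ) (hζ01 : ∀ x, 0 ≤ ζ x ∧ ζ x ≤ 1)
    (hζsupp : tsupport ζ ⊆ Set.Ioo r (2 * r)) (hζne : ∃ x, ζ x ≠ 0) :
    IntegrableOn ζ (Ioi 0) ∧ 0 < ∫ y in Ioi (0:ℝ), ζ y := by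
  have hcs : HasCompactSupport ζ :=
    HasCompactSupport.of_support_subset_isCompact (isCompact_Icc (a := r) (b := 2*r))
      ((subset_tsupport ζ).trans (hζsupp.trans Ioo_subset_Icc_self))
  have hi := hζc.integrable_of_hasCompactSupport (μ := volume) hcs
  refine ⟨hi.integrableOn, ?_⟩
  rw [setIntegral_eq_integral_of_forall_compl_eq_zero]
  · obtain ⟨a, ha⟩ := hζne
    exact hζc.integral_pos_of_hasCompactSupport_nonneg_nonzero hcs (fun y => (hζ01 y).1) ha
  · intro y hy
    by_contra h
    have := hζsupp (subset_tsupport ζ h)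
    exact hy (hr.trans this.1)

lemma lemZ1 {s r : ℝ} (hs : 1/2 < s) (hr : 0 < r) {ζ : ℝ → ℝ}
    (hζc : Continuous ζ) (hζ01 : ∀ x, 0 ≤ ζ x ∧ ζ x ≤ 1)
    (hζsupp : tsupport ζ ⊆ Set.Ioo r (2 * r)) (hζne : ∃ x, ζ x ≠ 0) {x : ℝ} (hx : x ∈ Ioo 0 r) :
    IntegrableOn (fun y : ℝ => ζ y * |x - y| ^ (-(1:ℝ) - 2 * s)) (Ioi 0) ∧
    (2 * r) ^ (-(1:ℝ) - 2 * s) * ∫ y in Ioi (0:ℝ), ζ y ≤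
      ∫ y in Ioi (0:ℝ), ζ y * |x - y| ^ (-(1:ℝ) - 2 * s) := by
  have hx0 := hx.1
  have hx1 := hx.2
  have hz := (lemZ0 hr hζc hζ01 hζsupp hζne).1
  have hmem : ∀ y, ζ y = 0 ∨ (r < y ∧ y < 2 * r) := by
    intro y
    by_cases h : ζ y = 0
    · exact Or.inl h
    · exact Or.inr (hζsupp (subset_tsupport ζ h))
  have hζm := hζc.measurable
  have hi : IntegrableOn (fun y : ℝ => ζ y * |x - y| ^ (-(1:ℝ) - 2 * s)) (Ioi 0) := by
    refine Integrable.mono' (hz.const_mul ((r - x) ^ (-(1:ℝ) - 2 * s)))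
      (Measurable.aestronglyMeasurable (by fun_prop)) (Filter.Eventually.of_forall fun y => ?_)
    have := (hζ01 y).1
    rw [Real.norm_of_nonneg (by positivity)]
    rcases hmem y with h | h
    · simp [h]
    · rw [mul_comm]
      refine mul_le_mul_of_nonneg_right ?_ this
      rw [abs_sub_comm, abs_of_pos (by linarith)]
      exact Real.rpow_le_rpow_of_nonpos (by linarith) (by linarith) (by linarith)
  refine ⟨hi, ?_⟩
  rw [← integral_const_mul]
  refine setIntegral_mono_on (hz.const_mul _) hi measurableSet_Ioi fun y hy => ?_
  have := (hζ01 y).1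
  rcases hmem y with h | h
  · simp [h]
  · rw [mul_comm]
    refine mul_le_mul_of_nonneg_left ?_ this
    rw [abs_sub_comm, abs_of_pos (by linarith)]
    exact Real.rpow_le_rpow_of_nonpos (by linarith) (by linarith) (by linarith)

lemma lemZ2 {s r : ℝ} (hs : 1/2 < s) (hr : 0 < r) {ζ : ℝ → ℝ}
    (hζc : Continuous ζ) (hζ01 : ∀ x, 0 ≤ ζ x ∧ ζ x ≤ 1)
    (hζsupp : tsupport ζ ⊆ Set.Ioo r (2 * r)) (hζne : ∃ x, ζ x ≠ 0) {x : ℝ} (hx : x ∈ Ioo 0 r) :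
    IntegrableOn (fun y : ℝ => ζ y * kI s x y) (Ioi 0) ∧
    2 * s * 2 ^ (-(1:ℝ) - 2 * s) * (3 * r) ^ (-(1:ℝ) - 2 * s) * Real.log (r / x) *
      ∫ y in Ioi (0:ℝ), ζ y ≤ ∫ y in Ioi (0:ℝ), ζ y * kI s x y := by
  have hx0 := hx.1
  have hx1 := hx.2
  have hz := (lemZ0 hr hζc hζ01 hζsupp hζne).1
  have hi : IntegrableOn (fun y : ℝ => ζ y * kI s x y) (Ioi 0) :=
    (fubA (by linarith) hx0).1.bdd_mul (c := 1) hζc.measurable.aestronglyMeasurable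
      (Filter.Eventually.of_forall fun y => by
        rw [Real.norm_of_nonneg (hζ01 y).1]; exact (hζ01 y).2)
  refine ⟨hi, ?_⟩
  rw [← integral_const_mul]
  refine setIntegral_mono_on (hz.const_mul _) hi measurableSet_Ioi fun y hy => ?_
  have := (hζ01 y).1
  by_cases h : ζ y = 0
  · simp [h]
  · have h' := hζsupp (subset_tsupport ζ h)
    rw [mul_comm]
    refine mul_le_mul_of_nonneg_left ?_ this
    exact kI_lower hs hx0 hx1 hy h'.2.le

lemma tendsto_E {q : ℝ → ℝ} (hq : IntegrableOn q (Ioi 0)) (x : ℝ) :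
    Tendsto (fun ε : ℝ => ∫ y in {y : ℝ | 0 < y ∧ ε < |x - y|}, q y) (𝓝[>] (0:ℝ))
      (𝓝 (∫ y in Ioi (0:ℝ), q y)) := by
  have hm : ∀ ε : ℝ, MeasurableSet {y : ℝ | ε < |x - y|} := fun ε =>
    measurableSet_lt measurable_const (by fun_prop)
  have he : ∀ ε : ℝ, ∫ y in {y : ℝ | 0 < y ∧ ε < |x - y|}, q y =
      ∫ y in Ioi (0:ℝ), ({y : ℝ | ε < |x - y|}).indicator q y := by
    intro ε
    rw [setIntegral_indicator (hm ε)]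
    rfl
  simp only [he]
  apply tendsto_integral_filter_of_dominated_convergence (fun y => ‖q y‖)
  · exact Filter.Eventually.of_forall fun ε => hq.aestronglyMeasurable.indicator (hm ε)
  · exact Filter.Eventually.of_forall fun ε => Filter.Eventually.of_forall fun y =>
      norm_indicator_le_norm_self q y
  · exact hq.norm
  · have hne : ∀ᵐ y ∂(volume.restrict (Ioi (0:ℝ))), y ≠ x := by
      apply ae_restrict_of_ae
      simp [ae_iff]
    filter_upwards [hne] with y hy
    apply tendsto_const_nhds.congr'
    have hpos : 0 < |x - y| := abs_pos.2 (sub_ne_zero.2 hy.symm)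
    filter_upwards [Ioo_mem_nhdsGT hpos] with ε hε
    rw [Set.indicator_of_mem]
    exact hε.2

lemma main_pv {s r : ℝ} (hs : 1/2 < s) (hs1 : s < 1) {K : ℝ → ℝ → ℝ} {θ : ℝ}
    {x : ℝ} (hx : x ∈ Ioo 0 r)
    (hK : ∀ y > 0, K x y = cNs 1 s * (|x - y| ^ (-(1:ℝ) - 2 * s) + θ * kI s x y))
    {η ζ : ℝ → ℝ} (hηx : η x = 1) (hζx : ζ x = 0) (M : ℝ)
    (hB1 : IntegrableOn (fun y : ℝ => (1 - η y) * y ^ (2*s-1) * |x - y| ^ (-(1:ℝ) - 2 * s)) (Ioi 0))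
    (hB2 : IntegrableOn (fun y : ℝ => (1 - η y) * y ^ (2*s-1) * kI s x y) (Ioi 0))
    (hZ1 : IntegrableOn (fun y : ℝ => ζ y * |x - y| ^ (-(1:ℝ) - 2 * s)) (Ioi 0))
    (hZ2 : IntegrableOn (fun y : ℝ => ζ y * kI s x y) (Ioi 0)) :
    HasPV1 K (fun t => η t * t ^ (2 * s - 1) + M * ζ t) x
      (cNs 1 s * ((∫ y in Ioi (0:ℝ), (1 - η y) * y ^ (2*s-1) * |x - y| ^ (-(1:ℝ) - 2 * s)) +
        θ * (∫ y in Ioi (0:ℝ), (1 - η y) * y ^ (2*s-1) * kI s x y) -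
        M * ((∫ y in Ioi (0:ℝ), ζ y * |x - y| ^ (-(1:ℝ) - 2 * s)) +
          θ * ∫ y in Ioi (0:ℝ), ζ y * kI s x y))) := by
  have hx0 := hx.1
  have hs0 : 0 < s := by linarith
  have hA := fubA hs0 hx0
  have hB := fubB hs hx0
  have iA : IntegrableOn (fun y => x ^ (2*s-1) * kI s x y) (Ioi 0) := hA.1.const_mul _
  have iD : IntegrableOn (fun y => θ * (x ^ (2*s-1) * kI s x y - y ^ (2*s-1) * kI s x y)) (Ioi 0) :=
    (iA.sub hB.1).const_mul θ
  have vD : ∫ y in Ioi (0:ℝ), θ * (x ^ (2*s-1) * kI s x y - y ^ (2*s-1) * kI s x y) = 0 := by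
    rw [integral_const_mul, integral_sub iA hB.1, integral_const_mul, hA.2, hB.2,
      Real.rpow_sub_one hx0.ne', Real.rpow_neg hx0.le]
    have : 0 < x ^ (2*s) := by positivity
    field_simp
    simp
  have iZ : IntegrableOn (fun y => M * (ζ y * |x - y| ^ (-(1:ℝ) - 2 * s) + θ * (ζ y * kI s x y))) (Ioi 0) :=
    (hZ1.add (hZ2.const_mul θ)).const_mul M
  have iB : IntegrableOn (fun y => (1 - η y) * y ^ (2*s-1) * |x - y| ^ (-(1:ℝ) - 2 * s) +
    θ * ((1 - η y) * y ^ (2*s-1) * kI s x y)) (Ioi 0) := hB1.add (hB2.const_mul θ)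
  set q : ℝ → ℝ := fun y => θ * (x ^ (2*s-1) * kI s x y - y ^ (2*s-1) * kI s x y) +
    (((1 - η y) * y ^ (2*s-1) * |x - y| ^ (-(1:ℝ) - 2 * s) +
    θ * ((1 - η y) * y ^ (2*s-1) * kI s x y)) -
    M * (ζ y * |x - y| ^ (-(1:ℝ) - 2 * s) + θ * (ζ y * kI s x y))) with hq
  have iq : IntegrableOn q (Ioi 0) := iD.add (iB.sub iZ)
  have vq : ∫ y in Ioi (0:ℝ), q y =
      (∫ y in Ioi (0:ℝ), (1 - η y) * y ^ (2*s-1) * |x - y| ^ (-(1:ℝ) - 2 * s)) +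
        θ * (∫ y in Ioi (0:ℝ), (1 - η y) * y ^ (2*s-1) * kI s x y) -
        M * ((∫ y in Ioi (0:ℝ), ζ y * |x - y| ^ (-(1:ℝ) - 2 * s)) +
          θ * ∫ y in Ioi (0:ℝ), ζ y * kI s x y) := by
    simp only [hq]
    refine (integral_add iD (iB.sub iZ)).trans ?_
    rw [vD, zero_add]
    refine (integral_sub iB iZ).trans ?_
    rw [
      integral_add hB1 (hB2.const_mul θ), integral_const_mul, integral_const_mul,
      integral_add hZ1 (hZ2.const_mul θ), integral_const_mul]
  rw [← vq]
  unfold HasPV1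
  have hlim := ((lemD hs hs1 hx0).add (tendsto_E iq x)).const_mul (cNs 1 s)
  rw [zero_add] at hlim
  refine hlim.congr' ?_
  filter_upwards [Ioo_mem_nhdsGT hx0] with ε hε
  have hC := lemC hs hε.1 hε.2
  have hmE : MeasurableSet {y : ℝ | 0 < y ∧ ε < |x - y|} :=
    (measurableSet_lt measurable_const measurable_id).inter
      (measurableSet_lt measurable_const (measurable_const.sub measurable_id).abs)
  have hsub : {y : ℝ | 0 < y ∧ ε < |x - y|} ⊆ Ioi 0 := fun y hy => hy.1
  rw [← hC.2, ← integral_add hC.1 (iq.mono_set hsub), ← integral_const_mul]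
  refine setIntegral_congr_fun hmE fun y hy => ?_
  simp only [hq]
  rw [hK y hy.1, hηx, hζx]
  ring

theorem one_dim_subsolution
    (s r₀ : ℝ) (hs : s ∈ Set.Ioo (1 / 2 : ℝ) 1) (hr₀ : 0 < r₀)
    (K : ℝ → ℝ → ℝ) (hK : K = neumannKer1 s ∨ K = regionalKer1 s)
    (η ζ : ℝ → ℝ)
    (hη : ContDiff ℝ (⊤ : ℕ∞) η) (hη01 : ∀ x, 0 ≤ η x ∧ η x ≤ 1)
    (hη1 : ∀ x ∈ Set.Icc (0:ℝ) r₀, η x = 1) (hηsupp : ∀ x : ℝ, 2 * r₀ ≤ x → η x = 0)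
    (hζ : ContDiff ℝ (⊤ : ℕ∞) ζ) (hζ01 : ∀ x, 0 ≤ ζ x ∧ ζ x ≤ 1)
    (hζsupp : tsupport ζ ⊆ Set.Ioo r₀ (2 * r₀)) (hζne : ∃ x, ζ x ≠ 0) :
    ∀ c ≥ (0:ℝ), ∃ M > (0:ℝ), ∀ x ∈ Set.Ioo (0:ℝ) r₀, ∃ l : ℝ,
      HasPV1 K (fun t => η t * t ^ (2 * s - 1) + M * ζ t) x l ∧ l ≤ -c ∧
      (K = neumannKer1 s → l ≤ -(c * (1 + logNeg (x / r₀)))) := by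
  intro c hc
  have hs1 := hs.1
  have hs2 := hs.2
  have hs0 : 0 < s := by linarith
  have hcp := cNs_pos hs
  have hζc := hζ.continuous
  obtain ⟨A, hA0, hA⟩ := lemE hs1 hs2 hr₀ hη hη01 hη1
  have hJ := (lemZ0 hr₀ hζc hζ01 hζsupp hζne).2
  set J := ∫ y in Ioi (0:ℝ), ζ y with hJd
  set b1 : ℝ := (2 * r₀) ^ (-(1:ℝ) - 2 * s) * J with hb1
  set b2 : ℝ := 2 * s * 2 ^ (-(1:ℝ) - 2 * s) * (3 * r₀) ^ (-(1:ℝ) - 2 * s) * J with hb2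
  have hb1p : 0 < b1 := by positivity
  have hb2p : 0 < b2 := by positivity
  set b := min b1 b2 with hb
  have hbp : 0 < b := lt_min hb1p hb2p
  set a : ℝ := A + 12 * s / r₀ with ha
  have hap : 0 < a := by positivity
  set M : ℝ := (a + c / cNs 1 s) / b with hM
  have hMp : 0 < M := by positivity
  have hMb : cNs 1 s * (a - M * b) = -c := by
    rw [hM]
    field_simp
    ring
  refine ⟨M, hMp, fun x hx => ?_⟩
  have hx0 := hx.1
  have hx1 := hx.2
  have hL : 0 ≤ Real.log (r₀ / x) := Real.log_nonneg (by rw [le_div_iff₀ hx0]; linarith)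
  have hlog : logNeg (x / r₀) = Real.log (r₀ / x) := by
    unfold logNeg
    rw [← Real.log_inv, inv_div]
    exact max_eq_right hL
  have hηx : η x = 1 := hη1 x ⟨hx0.le, hx1.le⟩
  have hζx : ζ x = 0 := by
    by_contra h
    have := (hζsupp (subset_tsupport ζ h)).1
    linarith
  have hB1 := hA x hx
  have hB2 := lemE2 hs1 hr₀ hη.continuous.measurable hη01 hη1 hx
  have hZ1 := lemZ1 hs1 hr₀ hζc hζ01 hζsupp hζne hx
  have hZ2 := lemZ2 hs1 hr₀ hζc hζ01 hζsupp hζne hx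
  set L := Real.log (r₀ / x) with hLd
  have e2 : b2 * L ≤ ∫ y in Ioi (0:ℝ), ζ y * kI s x y := by
    refine le_trans (le_of_eq ?_) hZ2.2
    rw [hb2]; ring
  have e1 := hZ1.2
  have f1 := hB1.2
  have f2 := hB2.2
  have hbb1 : b ≤ b1 := min_le_left _ _
  have hbb2 : b ≤ b2 := min_le_right _ _
  by_cases hKN : K = neumannKer1 s
  · have hKx : ∀ y > 0, K x y = cNs 1 s * (|x - y| ^ (-(1:ℝ) - 2 * s) + 1 * kI s x y) := by
      intro y hy
      rw [hKN, neumannKer1, k1_eq hs0 hx0 hy]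
      ring
    have hpv := main_pv hs1 hs2 hx hKx hηx hζx M hB1.1 hB2.1 hZ1.1 hZ2.1
    have hl : cNs 1 s * ((∫ y in Ioi (0:ℝ), (1 - η y) * y ^ (2*s-1) * |x - y| ^ (-(1:ℝ) - 2 * s)) +
        1 * (∫ y in Ioi (0:ℝ), (1 - η y) * y ^ (2*s-1) * kI s x y) -
        M * ((∫ y in Ioi (0:ℝ), ζ y * |x - y| ^ (-(1:ℝ) - 2 * s)) +
          1 * ∫ y in Ioi (0:ℝ), ζ y * kI s x y)) ≤ -(c * (1 + L)) := by
      have g1 : b * (1 + L) ≤ (∫ y in Ioi (0:ℝ), ζ y * |x - y| ^ (-(1:ℝ) - 2 * s)) +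
          1 * ∫ y in Ioi (0:ℝ), ζ y * kI s x y := by
        have := mul_le_mul_of_nonneg_right hbb2 hL
        linarith
      have g2 : (∫ y in Ioi (0:ℝ), (1 - η y) * y ^ (2*s-1) * |x - y| ^ (-(1:ℝ) - 2 * s)) +
        1 * (∫ y in Ioi (0:ℝ), (1 - η y) * y ^ (2*s-1) * kI s x y) ≤ a * (1 + L) := by
        have h1 : 0 ≤ A * L := by positivity
        have h2 : 4 * s / r₀ * (3 + L) ≤ 12 * s / r₀ * (1 + L) := by
          have : 0 ≤ 4 * s / r₀ * L := by positivity
          calc _ ≤ 4 * s / r₀ * (3 + L) + 2 * (4 * s / r₀ * L) := by linarith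
            _ = _ := by ring
        have h3 : a * (1 + L) = A + A * L + 12 * s / r₀ * (1 + L) := by rw [ha]; ring
        linarith
      have g3 := mul_le_mul_of_nonneg_left g1 hMp.le
      calc _ ≤ cNs 1 s * (a * (1 + L) - M * (b * (1 + L))) :=
            mul_le_mul_of_nonneg_left (by linarith) hcp.le
        _ = (cNs 1 s * (a - M * b)) * (1 + L) := by ring
        _ = _ := by rw [hMb]; ring
    refine ⟨_, hpv, hl.trans ?_, fun _ => ?_⟩
    · have : 0 ≤ c * L := by positivity
      linarith
    · rw [hlog]; exact hl
  · have hKR : K = regionalKer1 s := hK.resolve_left hKN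
    have hKx : ∀ y > 0, K x y = cNs 1 s * (|x - y| ^ (-(1:ℝ) - 2 * s) + 0 * kI s x y) := by
      intro y hy
      rw [hKR, regionalKer1]
      ring
    have hpv := main_pv hs1 hs2 hx hKx hηx hζx M hB1.1 hB2.1 hZ1.1 hZ2.1
    refine ⟨_, hpv, ?_, fun h => absurd h hKN⟩
    rw [← hMb]
    refine mul_le_mul_of_nonneg_left ?_ hcp.le
    have h1 : A ≤ a := by rw [ha]; have : 0 ≤ 12 * s / r₀ := by positivity
                          linarith
    have h2 : M * b ≤ M * ∫ y in Ioi (0:ℝ), ζ y * |x - y| ^ (-(1:ℝ) - 2 * s) :=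
      mul_le_mul_of_nonneg_left (hbb1.trans e1) hMp.le
    simp only [zero_mul, add_zero]
    linarith

end
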